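/- arXiv:2307.07539 — 7 statements merged into one kernel-verified Lean document; each statement's English description precedes it below -/
import Mathlib

section
/- Let H be a separable real Hilbert space with orthonormal (Hilbert) basis (φ_n)_{n≥1}, and for N ≥ 1 let π_N denote the orthogonal projection onto span{φ_1, …, φ_N}. Fix t ≥ 1, ρ > 0, f_1, …, f_t ∈ H, and real numbers ε_1, …, ε_t. Set S_t = Σ_{s=1}^t ε_s f_s and V_t g = Σ_{s=1}^t ⟨f_s, g⟩ f_s. Then ⟨π_N S_t, (ρ·id_H + π_N V_t π_N)^{-1} π_N S_t⟩ → ⟨S_t, (ρ·id_H + V_t)^{-1} S_t⟩ as N → ∞. -/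
open Filter
open scoped InnerProductSpace Topology

/-- The truncated self-normalized quadratic forms converge:
`⟨π_N S_t, (ρ·id + π_N V_t π_N)⁻¹ π_N S_t⟩ → ⟨S_t, (ρ·id + V_t)⁻¹ S_t⟩` as `N → ∞`,
where `S_t = Σ_{s=1}^t ε_s f_s`, `V_t g = Σ_{s=1}^t ⟨f_s, g⟩ f_s`, and `π_N` is the
orthogonal projection onto the span of the first `N` elements of an orthonormal basis. -/
theorem truncated_quadratic_form_tendsto
    {H : Type*} [NormedAddCommGroup H] [InnerProductSpace ℝ H] [CompleteSpace H]
    [SecondCountableTopology H]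
    (b : HilbertBasis ℕ ℝ H)
    (t : ℕ) (ht : 1 ≤ t) (ρ : ℝ) (hρ : 0 < ρ) (f : Fin t → H) (ε : Fin t → ℝ)
    -- `π_N f = Σ_{n=1}^N ⟨f, φ_n⟩ φ_n`, the orthogonal projection onto the first `N`
    -- basis vectors
    (π : ℕ → H →L[ℝ] H)
    (hπ : ∀ N, π N = ∑ n ∈ Finset.range N, (innerSL ℝ (b n)).smulRight (b n))
    -- `S_t = Σ_{s=1}^t ε_s f_s`
    (S : H) (hS : S = ∑ s : Fin t, ε s • f s)
    -- `V_t g = Σ_{s=1}^t ⟨f_s, g⟩ f_s`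
    (V : H →L[ℝ] H) (hV : V = ∑ s : Fin t, (innerSL ℝ (f s)).smulRight (f s)) :
    Tendsto
      (fun N => ⟪π N S,
        Ring.inverse (ρ • ContinuousLinearMap.id ℝ H + (π N).comp (V.comp (π N)))
          (π N S)⟫_ℝ)
      atTop
      (𝓝 ⟪S, Ring.inverse (ρ • ContinuousLinearMap.id ℝ H + V) S⟫_ℝ) := by
  have hπa : ∀ N x, π N x = ∑ n ∈ Finset.range N, ⟪b n, x⟫_ℝ • b n := by
    intro N x
    simp [hπ]
  have hlim : ∀ x, Tendsto (fun N => π N x) atTop (𝓝 x) := by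
    intro x
    have h := (b.hasSum_repr x).tendsto_sum_nat
    simpa [hπa, b.repr_apply_apply] using h
  have hsymm : ∀ N x y, ⟪x, π N y⟫_ℝ = ⟪π N x, y⟫_ℝ := by
    intro N x y
    rw [hπa, hπa, inner_sum, sum_inner]
    refine Finset.sum_congr rfl fun n _ => ?_
    rw [inner_smul_right, inner_smul_left, real_inner_comm x (b n)]
    simp [mul_comm]
  have hcomp : ∀ N, (π N).comp (V.comp (π N))
      = ∑ s : Fin t, (innerSL ℝ (π N (f s))).smulRight (π N (f s)) := by
    intro N
    ext x
    simp [hV, hsymm]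
  have hVlim : Tendsto (fun N => ρ • ContinuousLinearMap.id ℝ H + (π N).comp (V.comp (π N)))
      atTop (𝓝 (ρ • ContinuousLinearMap.id ℝ H + V)) := by
    refine tendsto_const_nhds.add ?_
    simp only [hcomp]
    rw [hV]
    refine tendsto_finsetSum _ fun s _ => ?_
    have hc : Continuous fun y : H => (innerSL ℝ y).smulRight y := by
      have : Continuous fun y : H =>
          ContinuousLinearMap.smulRightL ℝ H H (innerSL ℝ y) y := by fun_prop
      exact this
    exact (hc.tendsto (f s)).comp (hlim (f s))
  have hu : IsUnit (ρ • ContinuousLinearMap.id ℝ H + V) := by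
    refine ContinuousLinearMap.isUnit_of_forall_le_norm_inner_map _ (c := ⟨ρ, hρ.le⟩) hρ ?_
    intro x
    have hVx : 0 ≤ ⟪V x, x⟫_ℝ := by
      rw [hV]
      simp only [ContinuousLinearMap.sum_apply, ContinuousLinearMap.smulRight_apply,
        innerSL_apply_apply, sum_inner, inner_smul_left]
      refine Finset.sum_nonneg fun s _ => ?_
      exact mul_self_nonneg _
    have : ⟪(ρ • ContinuousLinearMap.id ℝ H + V) x, x⟫_ℝ = ρ * ‖x‖ ^ 2 + ⟪V x, x⟫_ℝ := by
      simp [inner_add_left, inner_smul_left]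
    rw [this]
    refine le_trans ?_ (le_abs_self _)
    change ‖x‖ ^ 2 * ρ ≤ _
    linarith
  obtain ⟨u, hu⟩ := hu
  have hinv := (NormedRing.inverse_continuousAt u).tendsto
  rw [hu] at hinv
  have happ : Continuous fun p : (H →L[ℝ] H) × H => p.1 p.2 := by fun_prop
  exact (hlim S).inner ((happ.tendsto _).comp ((hinv.comp hVlim).prodMk_nhds (hlim S)))
end

section
/- Let H be a real Hilbert space, fix t ≥ 1, ρ > 0, f_1, …, f_t ∈ H, and ε = (ε_1, …, ε_t) ∈ ℝ^t. Set S_t = Σ_{s=1}^t ε_s f_s, let V_t be the operator g ↦ Σ_{s=1}^t ⟨f_s, g⟩ f_s, and let K_t ∈ ℝ^{t×t} be the Gram matrix (K_t)_{ij} = ⟨f_i, f_j⟩. Then ⟨S_t, (ρ·id_H + V_t)^{-1} S_t⟩ = εᵀ (ρ^{-1}K_t)(I_t + ρ^{-1}K_t)^{-1} ε; in particular, if K_t is invertible, this quantity equals εᵀ (I_t + ρ K_t^{-1})^{-1} ε. -/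
open scoped InnerProductSpace Matrix

/-- Kernel-trick identity for the self-normalized quadratic form:
`⟨S_t, (ρ·id + V_t)⁻¹ S_t⟩ = εᵀ (ρ⁻¹K_t)(I_t + ρ⁻¹K_t)⁻¹ ε`, and if the Gram matrix `K_t`
is invertible this also equals `εᵀ (I_t + ρ K_t⁻¹)⁻¹ ε`. -/
theorem self_normalized_norm_kernel_trick
    {H : Type*} [NormedAddCommGroup H] [InnerProductSpace ℝ H] [CompleteSpace H]
    (t : ℕ) (ht : 1 ≤ t) (ρ : ℝ) (hρ : 0 < ρ) (f : Fin t → H) (ε : Fin t → ℝ)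
    -- `S_t = Σ_{s=1}^t ε_s f_s`
    (S : H) (hS : S = ∑ s : Fin t, ε s • f s)
    -- `V_t g = Σ_{s=1}^t ⟨f_s, g⟩ f_s`
    (V : H →L[ℝ] H) (hV : V = ∑ s : Fin t, (innerSL ℝ (f s)).smulRight (f s))
    -- Gram matrix `(K_t)_{ij} = ⟨f_i, f_j⟩`
    (K : Matrix (Fin t) (Fin t) ℝ) (hK : ∀ i j, K i j = ⟪f i, f j⟫_ℝ) :
    ⟪S, Ring.inverse (ρ • ContinuousLinearMap.id ℝ H + V) S⟫_ℝ =
        ε ⬝ᵥ (((ρ⁻¹ • K) * (1 + ρ⁻¹ • K)⁻¹) *ᵥ ε) ∧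
      (IsUnit K.det →
        ⟪S, Ring.inverse (ρ • ContinuousLinearMap.id ℝ H + V) S⟫_ℝ =
          ε ⬝ᵥ ((1 + ρ • K⁻¹)⁻¹ *ᵥ ε)) := by
  have hA : IsUnit (ρ • ContinuousLinearMap.id ℝ H + V) := by
    apply ContinuousLinearMap.isUnit_of_forall_le_norm_inner_map _ (c := ⟨ρ, hρ.le⟩) hρ
    intro x
    have h : ⟪(ρ • ContinuousLinearMap.id ℝ H + V) x, x⟫_ℝ
        = ρ * ‖x‖ ^ 2 + ∑ s, ⟪f s, x⟫_ℝ ^ 2 := by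
      subst hV
      simp [inner_add_left, sum_inner, inner_smul_left, pow_two]
    have h2 : 0 ≤ ∑ s, ⟪f s, x⟫_ℝ ^ 2 := Finset.sum_nonneg fun _ _ => sq_nonneg _
    rw [h, Real.norm_eq_abs]
    refine le_trans ?_ (le_abs_self _)
    change ‖x‖ ^ 2 * ρ ≤ _
    linarith
  have hKg : K = Matrix.gram ℝ f := by
    ext i j
    simp [hK, Matrix.gram]
  have hKp : K.PosSemidef := hKg ▸ Matrix.posSemidef_gram ℝ f
  have hM : IsUnit (1 + ρ⁻¹ • K).det := by
    have : (1 + ρ⁻¹ • K).PosDef :=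
      Matrix.PosDef.one.add_posSemidef (hKp.smul (inv_pos.2 hρ).le)
    exact this.det_pos.ne'.isUnit
  have key : ⟪S, Ring.inverse (ρ • ContinuousLinearMap.id ℝ H + V) S⟫_ℝ =
        ε ⬝ᵥ (((ρ⁻¹ • K) * (1 + ρ⁻¹ • K)⁻¹) *ᵥ ε) := by
    rw [← Matrix.mulVec_mulVec]
    obtain ⟨a, ha⟩ : ∃ a, a = (1 + ρ⁻¹ • K)⁻¹ *ᵥ ε := ⟨_, rfl⟩
    have hMa : (1 + ρ⁻¹ • K) *ᵥ a = ε := by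
      rw [ha, Matrix.mulVec_mulVec, Matrix.mul_nonsing_inv _ hM, Matrix.one_mulVec]
    rw [← ha]
    have hw : (ρ • ContinuousLinearMap.id ℝ H + V) (ρ⁻¹ • ∑ s, a s • f s) = S := by
      have e : ∀ s, ε s = a s + ρ⁻¹ * ∑ j, a j * ⟪f s, f j⟫_ℝ := by
        intro s
        rw [← hMa, Matrix.add_mulVec, Matrix.smul_mulVec, Matrix.one_mulVec]
        simp [Matrix.mulVec, dotProduct, hK, mul_comm]
      rw [hS, hV]
      simp only [e, add_smul, Finset.sum_add_distrib]
      rw [map_smul, add_apply, smul_add]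
      congr 1
      · rw [smul_apply, smul_smul, inv_mul_cancel₀ hρ.ne', one_smul]
        rfl
      · rw [sum_apply, Finset.smul_sum]
        refine Finset.sum_congr rfl fun s _ => ?_
        simp only [ContinuousLinearMap.smulRight_apply, innerSL_apply_apply, inner_sum,
          inner_smul_right, smul_smul]
    have hinv : Ring.inverse (ρ • ContinuousLinearMap.id ℝ H + V) S
        = ρ⁻¹ • ∑ s, a s • f s := by
      have := congrArg (fun T : H →L[ℝ] H => T (ρ⁻¹ • ∑ s, a s • f s))
        (Ring.inverse_mul_cancel _ hA)
      change Ring.inverse (ρ • ContinuousLinearMap.id ℝ H + V) ((ρ • ContinuousLinearMap.id ℝ H + V) (ρ⁻¹ • ∑ s, a s • f s)) = _ at this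
      rw [hw] at this
      exact this
    rw [hinv, hS, inner_smul_right, sum_inner, Matrix.smul_mulVec, dotProduct_smul, smul_eq_mul]
    congr 1
    simp only [dotProduct, Matrix.mulVec, hK]
    refine Finset.sum_congr rfl fun i _ => ?_
    rw [inner_smul_left, inner_sum]
    simp [inner_smul_right, mul_comm]
  refine ⟨key, fun hd => ?_⟩
  rw [key]
  congr 2
  symm
  apply Matrix.inv_eq_right_inv
  rw [← mul_assoc, add_mul, one_mul, smul_mul_smul_comm, Matrix.nonsing_inv_mul _ hd,
    mul_inv_cancel₀ hρ.ne', one_smul, add_comm, Matrix.mul_nonsing_inv _ hM]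
end

section
/- Let H be a real Hilbert space, fix t ≥ 1, ρ > 0, features f_1, …, f_t ∈ H, noise values ε_1, …, ε_t ∈ ℝ, and a target f* ∈ H. Set Y_s = ⟨f*, f_s⟩ + ε_s, let V_t be the operator g ↦ Σ_{s=1}^t ⟨f_s, g⟩ f_s, S_t = Σ_{s=1}^t ε_s f_s, and define the ridge estimator f̂_t = (ρ·id_H + V_t)^{-1} ( Σ_{s=1}^t Y_s f_s ). Then f̂_t − f* = (ρ·id_H + V_t)^{-1} S_t − ρ (ρ·id_H + V_t)^{-1} f*, and consequently ⟨f̂_t − f*, (ρ·id_H + V_t)(f̂_t − f*)⟩^{1/2} ≤ ⟨S_t, (ρ·id_H + V_t)^{-1} S_t⟩^{1/2} + ρ^{1/2} ‖f*‖_H. -/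
open scoped InnerProductSpace

/-- Decomposition of the ridge-estimation error and the resulting bound:
`f̂_t − f* = (ρ·id + V_t)⁻¹ S_t − ρ (ρ·id + V_t)⁻¹ f*`, and consequently
`‖(ρ·id + V_t)^{1/2}(f̂_t − f*)‖ ≤ ‖(ρ·id + V_t)^{-1/2} S_t‖ + ρ^{1/2} ‖f*‖`. -/
theorem ridge_error_decomposition
    {H : Type*} [NormedAddCommGroup H] [InnerProductSpace ℝ H] [CompleteSpace H]
    (t : ℕ) (ht : 1 ≤ t) (ρ : ℝ) (hρ : 0 < ρ)
    (f : Fin t → H) (ε : Fin t → ℝ) (fstar : H)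
    -- observations `Y_s = ⟨f*, f_s⟩ + ε_s`
    (Y : Fin t → ℝ) (hY : ∀ s, Y s = ⟪fstar, f s⟫_ℝ + ε s)
    -- `V_t g = Σ_{s=1}^t ⟨f_s, g⟩ f_s`
    (V : H →L[ℝ] H) (hV : V = ∑ s : Fin t, (innerSL ℝ (f s)).smulRight (f s))
    -- `S_t = Σ_{s=1}^t ε_s f_s`
    (S : H) (hS : S = ∑ s : Fin t, ε s • f s)
    -- ridge estimator `f̂_t = (ρ·id + V_t)⁻¹ (Σ_{s=1}^t Y_s f_s)`
    (fhat : H)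
    (hfhat : fhat =
      Ring.inverse (ρ • ContinuousLinearMap.id ℝ H + V) (∑ s : Fin t, Y s • f s)) :
    fhat - fstar =
        Ring.inverse (ρ • ContinuousLinearMap.id ℝ H + V) S -
          ρ • Ring.inverse (ρ • ContinuousLinearMap.id ℝ H + V) fstar ∧
      Real.sqrt ⟪fhat - fstar, (ρ • ContinuousLinearMap.id ℝ H + V) (fhat - fstar)⟫_ℝ ≤
        Real.sqrt ⟪S, Ring.inverse (ρ • ContinuousLinearMap.id ℝ H + V) S⟫_ℝ +
          Real.sqrt ρ * ‖fstar‖ := by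
  have hVapp : ∀ g, V g = ∑ s : Fin t, ⟪f s, g⟫_ℝ • f s := by
    intro g
    rw [hV]
    simp
  have hVinner : ∀ g h, ⟪g, V h⟫_ℝ = ∑ s : Fin t, ⟪f s, h⟫_ℝ * ⟪f s, g⟫_ℝ := by
    intro g h
    rw [hVapp, inner_sum]
    refine Finset.sum_congr rfl fun s _ => ?_
    rw [real_inner_smul_right, real_inner_comm g (f s)]
  have hVpos : ∀ g, 0 ≤ ⟪g, V g⟫_ℝ := by
    intro g
    rw [hVinner]
    exact Finset.sum_nonneg fun s _ => mul_self_nonneg _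
  have hVsymm : ∀ g h, ⟪g, V h⟫_ℝ = ⟪h, V g⟫_ℝ := by
    intro g h
    rw [hVinner, hVinner]
    exact Finset.sum_congr rfl fun s _ => mul_comm _ _
  have hAapp : ∀ g, (ρ • ContinuousLinearMap.id ℝ H + V) g = ρ • g + V g := by
    intro g
    simp
  generalize hA : ρ • ContinuousLinearMap.id ℝ H + V = A at *
  have hApos : ∀ g, ρ * ‖g‖ ^ 2 ≤ ⟪g, A g⟫_ℝ := by
    intro g
    rw [hAapp, inner_add_right, real_inner_smul_right, real_inner_self_eq_norm_sq]
    linarith [hVpos g]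
  have hAsymm : ∀ g h, ⟪g, A h⟫_ℝ = ⟪h, A g⟫_ℝ := by
    intro g h
    rw [hAapp, hAapp, inner_add_right, inner_add_right, real_inner_smul_right,
      real_inner_smul_right, hVsymm g h, real_inner_comm]
  have hU : IsUnit A := by
    refine ContinuousLinearMap.isUnit_of_forall_le_norm_inner_map A (c := ⟨ρ, hρ.le⟩) hρ ?_
    intro x
    rw [real_inner_comm]
    refine le_trans ?_ (le_abs_self _)
    have := hApos x
    change ‖x‖ ^ 2 * ρ ≤ _
    linarith
  have hBA : ∀ g, Ring.inverse A (A g) = g := fun g => by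
    have := DFunLike.congr_fun (Ring.inverse_mul_cancel A hU) g
    simpa using this
  have hAB : ∀ g, A (Ring.inverse A g) = g := fun g => by
    have := DFunLike.congr_fun (Ring.mul_inverse_cancel A hU) g
    simpa using this
  have hsum : ∑ s : Fin t, Y s • f s = A fstar - ρ • fstar + S := by
    rw [hAapp, hVapp, hS, add_sub_cancel_left, ← Finset.sum_add_distrib]
    refine Finset.sum_congr rfl fun s _ => ?_
    rw [hY, add_smul, real_inner_comm]
  have hdec : fhat - fstar = Ring.inverse A S - ρ • Ring.inverse A fstar := by
    rw [hfhat, hsum, map_add, map_sub, hBA, map_smul]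
    abel
  refine ⟨hdec, ?_⟩
  rw [hdec]
  have hu := hAB S
  have hw := hAB fstar
  generalize Ring.inverse A S = u at *
  generalize Ring.inverse A fstar = w at *
  have ha : ρ * ‖u‖ ^ 2 ≤ ⟪S, u⟫_ℝ := by
    have := hApos u
    rwa [hu, real_inner_comm] at this
  have hb : ρ * ⟪w, fstar⟫_ℝ ≤ ‖fstar‖ ^ 2 := by
    have h1 : fstar = ρ • w + V w := by rw [← hAapp, hw]
    have h2 : ‖fstar‖ ^ 2 = ρ * ⟪w, fstar⟫_ℝ + (ρ * ⟪w, V w⟫_ℝ + ‖V w‖ ^ 2) := by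
      rw [← real_inner_self_eq_norm_sq, ← real_inner_self_eq_norm_sq, h1]
      simp only [inner_add_left, inner_add_right, real_inner_smul_left, real_inner_smul_right,
        real_inner_comm w (V w)]
      ring
    have := mul_nonneg hρ.le (hVpos w)
    nlinarith [sq_nonneg ‖V w‖]
  have ha0 : 0 ≤ ⟪S, u⟫_ℝ := le_trans (by positivity) ha
  have hexp : ⟪u - ρ • w, A (u - ρ • w)⟫_ℝ
      = ⟪S, u⟫_ℝ - 2 * ρ * ⟪u, fstar⟫_ℝ + ρ * (ρ * ⟪w, fstar⟫_ℝ) := by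
    have h3 : ⟪w, S⟫_ℝ = ⟪u, fstar⟫_ℝ := by rw [← hu, ← hw, hAsymm]
    rw [map_sub, map_smul, hu, hw]
    simp only [inner_sub_left, inner_sub_right, real_inner_smul_left, real_inner_smul_right, h3,
      real_inner_comm S u]
    ring
  have hsu : √ρ * ‖u‖ ≤ √⟪S, u⟫_ℝ := by
    apply Real.le_sqrt_of_sq_le
    rw [mul_pow, Real.sq_sqrt hρ.le]
    exact ha
  have hcs : -(ρ * ⟪u, fstar⟫_ℝ) ≤ √⟪S, u⟫_ℝ * (√ρ * ‖fstar‖) := by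
    have h4 : -⟪u, fstar⟫_ℝ ≤ ‖u‖ * ‖fstar‖ :=
      (neg_le_abs _).trans (abs_real_inner_le_norm _ _)
    calc -(ρ * ⟪u, fstar⟫_ℝ) = ρ * -⟪u, fstar⟫_ℝ := by ring
      _ ≤ ρ * (‖u‖ * ‖fstar‖) := mul_le_mul_of_nonneg_left h4 hρ.le
      _ = (√ρ * ‖u‖) * (√ρ * ‖fstar‖) := by
        nth_rewrite 1 [← Real.mul_self_sqrt hρ.le]
        ring
      _ ≤ _ := mul_le_mul_of_nonneg_right hsu (by positivity)
  apply Real.sqrt_le_iff.mpr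
  refine ⟨by positivity, ?_⟩
  rw [hexp, add_sq, mul_pow, Real.sq_sqrt hρ.le, Real.sq_sqrt ha0]
  have := mul_le_mul_of_nonneg_left hb hρ.le
  linarith
end

section
/- Let H be a real Hilbert space, fix t ≥ 1, ρ > 0, and f_1, …, f_t ∈ H. For 0 ≤ s ≤ t let V_s be the operator g ↦ Σ_{r=1}^s ⟨f_r, g⟩ f_r (with V_0 = 0), and let K_t ∈ ℝ^{t×t} be the Gram matrix (K_t)_{ij} = ⟨f_i, f_j⟩. Then det(I_t + ρ^{-1} K_t) = ∏_{s=1}^t ( 1 + ⟨f_s, (ρ·id_H + V_{s-1})^{-1} f_s⟩ ). -/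
open scoped InnerProductSpace

section Aux
variable {H : Type*} [NormedAddCommGroup H] [InnerProductSpace ℝ H] [CompleteSpace H]

noncomputable def auxA (ρ : ℝ) (f : ℕ → H) (n : ℕ) : Matrix (Fin n) (Fin n) ℝ :=
  1 + ρ⁻¹ • Matrix.gram ℝ (fun i : Fin n => f (i.1 + 1))

noncomputable def auxT (ρ : ℝ) (f : ℕ → H) (n : ℕ) : H →L[ℝ] H :=
  ρ • ContinuousLinearMap.id ℝ H + ∑ r ∈ Finset.Icc 1 n, (innerSL ℝ (f r)).smulRight (f r)

lemma auxA_det (ρ : ℝ) (hρ : 0 < ρ) (f : ℕ → H) (n : ℕ) : IsUnit (auxA ρ f n).det := by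
  have h : (auxA ρ f n).PosDef :=
    Matrix.PosDef.one.add_posSemidef
      ((Matrix.posSemidef_gram ℝ (fun i : Fin n => f (i.1 + 1))).smul (inv_nonneg.2 hρ.le))
  exact h.det_pos.ne'.isUnit

lemma auxT_apply (ρ : ℝ) (f : ℕ → H) (n : ℕ) (x : H) :
    auxT ρ f n x = ρ • x + ∑ i : Fin n, ⟪f (i.1 + 1), x⟫_ℝ • f (i.1 + 1) := by
  rw [Fin.sum_univ_eq_sum_range (fun i => ⟪f (i + 1), x⟫_ℝ • f (i + 1)) n]
  have : Finset.Icc 1 n = Finset.Ico 1 (n + 1) := by ext; simp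
  simp [auxT, this, Finset.sum_Ico_eq_sum_range, add_comm 1]

noncomputable def auxC (ρ : ℝ) (f : ℕ → H) (n : ℕ) (g : H) : Fin n → ℝ :=
  Matrix.mulVec (auxA ρ f n)⁻¹ (fun i => ρ⁻¹ * ⟪f (i.1 + 1), g⟫_ℝ)

noncomputable def auxH (ρ : ℝ) (f : ℕ → H) (n : ℕ) (g : H) : H :=
  ρ⁻¹ • (g - ∑ i : Fin n, auxC ρ f n g i • f (i.1 + 1))

lemma auxT_auxH (ρ : ℝ) (hρ : 0 < ρ) (f : ℕ → H) (n : ℕ) (g : H) :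
    auxT ρ f n (auxH ρ f n g) = g := by
  have h : Matrix.mulVec (auxA ρ f n) (auxC ρ f n g) = fun i => ρ⁻¹ * ⟪f (i.1 + 1), g⟫_ℝ := by
    rw [auxC, Matrix.mulVec_mulVec, Matrix.mul_nonsing_inv _ (auxA_det ρ hρ f n),
      Matrix.one_mulVec]
  have h2 : ∀ i : Fin n, ⟪f (i.1 + 1), auxH ρ f n g⟫_ℝ = auxC ρ f n g i := by
    intro i
    have := congrFun h i
    rw [auxA, Matrix.add_mulVec, Matrix.one_mulVec, Matrix.smul_mulVec] at this
    simp only [Pi.add_apply, Pi.smul_apply, Matrix.mulVec, dotProduct, Matrix.gram_apply, smul_eq_mul] at this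
    simp only [auxH, inner_smul_right, inner_sub_right, inner_sum]
    rw [mul_sub, ← this]
    simp only [mul_comm (auxC ρ f n g _)]
    ring
  rw [auxT_apply]
  simp only [h2]
  rw [auxH, smul_inv_smul₀ hρ.ne']
  abel

lemma auxT_unit (ρ : ℝ) (hρ : 0 < ρ) (f : ℕ → H) (n : ℕ) : IsUnit (auxT ρ f n) := by
  rw [ContinuousLinearMap.isUnit_iff_bijective]
  refine ⟨?_, fun g => ⟨_, auxT_auxH ρ hρ f n g⟩⟩
  rw [injective_iff_map_eq_zero]
  intro x hx
  have h : ⟪x, auxT ρ f n x⟫_ℝ = 0 := by rw [hx, inner_zero_right]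
  rw [auxT_apply, inner_add_right, inner_sum, inner_smul_right] at h
  have h3 : 0 ≤ ∑ i : Fin n, ⟪x, ⟪f (i.1 + 1), x⟫_ℝ • f (i.1 + 1)⟫_ℝ := by
    refine Finset.sum_nonneg fun i _ => ?_
    rw [inner_smul_right, real_inner_comm]
    exact mul_self_nonneg _
  have h4 : 0 ≤ ⟪x, x⟫_ℝ := real_inner_self_nonneg
  have h5 : ⟪x, x⟫_ℝ = 0 := by nlinarith
  exact inner_self_eq_zero.1 h5

lemma auxT_inv (ρ : ℝ) (hρ : 0 < ρ) (f : ℕ → H) (n : ℕ) (g : H) :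
    Ring.inverse (auxT ρ f n) g = auxH ρ f n g := by
  have h := Ring.inverse_mul_cancel _ (auxT_unit ρ hρ f n)
  have h2 := DFunLike.congr_fun h (auxH ρ f n g)
  simpa [auxT_auxH ρ hρ f n g] using h2

noncomputable def auxB (ρ : ℝ) (f : ℕ → H) (n : ℕ) : Matrix (Fin n) (Fin 1) ℝ :=
  Matrix.of fun i _ => ρ⁻¹ * ⟪f (i.1 + 1), f (n + 1)⟫_ℝ

noncomputable def auxD (ρ : ℝ) (f : ℕ → H) (n : ℕ) : Matrix (Fin 1) (Fin 1) ℝ :=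
  Matrix.of fun _ _ => 1 + ρ⁻¹ * ⟪f (n + 1), f (n + 1)⟫_ℝ

noncomputable def auxE (ρ : ℝ) (f : ℕ → H) (n : ℕ) : Matrix (Fin n) (Fin 1) ℝ :=
  Matrix.of fun i _ => auxC ρ f n (f (n + 1)) i

lemma auxA_succ (ρ : ℝ) (hρ : 0 < ρ) (f : ℕ → H) (n : ℕ) :
    (auxA ρ f (n + 1)).det = (auxA ρ f n).det *
      (1 + ⟪f (n + 1), Ring.inverse (auxT ρ f n) (f (n + 1))⟫_ℝ) := by
  have hb : (auxA ρ f (n + 1)).submatrix finSumFinEquiv finSumFinEquiv =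
      Matrix.fromBlocks (auxA ρ f n)
        (auxB ρ f n)
        (auxB ρ f n).transpose
        (auxD ρ f n) := by
    ext i j
    rcases i with i | i <;> rcases j with j | j
    · simp [auxA, auxB, auxD, Matrix.one_apply, Matrix.gram_apply]
    · have : Fin.castAdd 1 i ≠ Fin.natAdd n j := by
        intro h; have := congrArg Fin.val h; simp at this; omega
      simp [auxA, auxB, auxD, Matrix.one_apply, Matrix.gram_apply, -Fin.natAdd_eq_addNat, this]
    · have : Fin.natAdd n i ≠ Fin.castAdd 1 j := by
        intro h; have := congrArg Fin.val h; simp at this; omega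
      simp [auxA, auxB, auxD, Matrix.one_apply, Matrix.gram_apply, -Fin.natAdd_eq_addNat, this,
        real_inner_comm]
    · have : i = j := Subsingleton.elim _ _
      subst this
      simp [auxA, auxB, auxD, Matrix.one_apply, Matrix.gram_apply]
  rw [← Matrix.det_submatrix_equiv_self finSumFinEquiv, hb]
  letI := Matrix.invertibleOfIsUnitDet _ (auxA_det ρ hρ f n)
  rw [Matrix.det_fromBlocks₁₁, Matrix.invOf_eq_nonsing_inv, Matrix.mul_assoc, auxT_inv ρ hρ]
  congr 1
  rw [Matrix.det_fin_one, auxH]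
  have : ((auxA ρ f n)⁻¹ * (auxB ρ f n))
      = auxE ρ f n := by
    ext i j
    simp [Matrix.mul_apply, auxE, auxB, auxC, Matrix.mulVec, dotProduct]
  rw [this]
  simp only [auxB, auxD, auxE, Matrix.sub_apply, Matrix.of_apply, Matrix.mul_apply, Matrix.transpose_apply, inner_smul_right,
    inner_sub_right, inner_sum, mul_sub, Finset.mul_sum]
  rw [add_sub_assoc]
  congr 2
  refine Finset.sum_congr rfl fun i _ => ?_
  rw [real_inner_comm]
  ring

lemma auxA_prod (ρ : ℝ) (hρ : 0 < ρ) (f : ℕ → H) (n : ℕ) :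
    (auxA ρ f n).det = ∏ s ∈ Finset.Icc 1 n,
      (1 + ⟪f s, Ring.inverse (auxT ρ f (s - 1)) (f s)⟫_ℝ) := by
  induction n with
  | zero => simp
  | succ n ih => rw [auxA_succ ρ hρ, ih, Finset.prod_Icc_succ_top (by omega)]; simp

end Aux

/-- Determinant product identity ("elliptical potential" identity):
`det(I_t + ρ⁻¹ K_t) = ∏_{s=1}^t (1 + ⟨f_s, (ρ·id + V_{s-1})⁻¹ f_s⟩)`, where
`V_s g = Σ_{r=1}^s ⟨f_r, g⟩ f_r` (with `V_0 = 0`) and `(K_t)_{ij} = ⟨f_i, f_j⟩`. -/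
theorem det_product_identity
    {H : Type*} [NormedAddCommGroup H] [InnerProductSpace ℝ H] [CompleteSpace H]
    (t : ℕ) (ht : 1 ≤ t) (ρ : ℝ) (hρ : 0 < ρ) (f : ℕ → H)
    -- partial covariance operators `V_s g = Σ_{r=1}^s ⟨f_r, g⟩ f_r` (so `V 0 = 0`)
    (V : ℕ → H →L[ℝ] H)
    (hV : ∀ s, V s = ∑ r ∈ Finset.Icc 1 s, (innerSL ℝ (f r)).smulRight (f r))
    -- Gram matrix `(K_t)_{ij} = ⟨f_i, f_j⟩`
    (K : Matrix (Fin t) (Fin t) ℝ)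
    (hK : ∀ i j : Fin t, K i j = ⟪f (i.1 + 1), f (j.1 + 1)⟫_ℝ) :
    Matrix.det (1 + ρ⁻¹ • K) =
      ∏ s ∈ Finset.Icc 1 t,
        (1 + ⟪f s, Ring.inverse (ρ • ContinuousLinearMap.id ℝ H + V (s - 1)) (f s)⟫_ℝ) := by
  have hA : 1 + ρ⁻¹ • K = auxA ρ f t := by
    have : K = Matrix.gram ℝ (fun i : Fin t => f (i.1 + 1)) := by
      ext i j
      rw [hK, Matrix.gram_apply]
    rw [auxA, this]
  rw [hA, auxA_prod ρ hρ]
  simp only [hV, auxT]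
end

section
/- Let H be a real Hilbert space, fix t ≥ 1 and f_1, …, f_t ∈ H with ‖f_s‖² ≤ L for all s and some L > 0, and let ρ ≥ max(1, L). For 0 ≤ s ≤ t let V_s be the operator g ↦ Σ_{r=1}^s ⟨f_r, g⟩ f_r (with V_0 = 0), and let K_t be the Gram matrix (K_t)_{ij} = ⟨f_i, f_j⟩. Then Σ_{s=1}^t ⟨f_s, (ρ·id_H + V_{s-1})^{-1} f_s⟩ ≤ 2 log det(I_t + ρ^{-1} K_t). -/
open scoped InnerProductSpace

section helpers
variable {H : Type*} [NormedAddCommGroup H] [InnerProductSpace ℝ H] [CompleteSpace H]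

noncomputable def epV (f : ℕ → H) (n : ℕ) : H →L[ℝ] H :=
  ∑ r ∈ Finset.Icc 1 n, (innerSL ℝ (f r)).smulRight (f r)

noncomputable def epN (f : ℕ → H) (ρ : ℝ) (n : ℕ) : Matrix (Fin n) (Fin n) ℝ :=
  1 + ρ⁻¹ • Matrix.of fun i j : Fin n => ⟪f (i.1 + 1), f (j.1 + 1)⟫_ℝ

lemma epV_apply (f : ℕ → H) (n : ℕ) (u : H) :
    epV f n u = ∑ i : Fin n, ⟪f (i.1 + 1), u⟫_ℝ • f (i.1 + 1) := by
  rw [Fin.sum_univ_eq_sum_range (fun i => ⟪f (i + 1), u⟫_ℝ • f (i + 1)) n,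
    Finset.range_eq_Ico,
    Finset.sum_Ico_add' (fun i => ⟪f i, u⟫_ℝ • f i) 0 n 1]
  have : Finset.Ico (0+1) (n+1) = Finset.Icc 1 n := by ext; simp
  rw [this]
  simp [epV]

lemma ep_coercive (f : ℕ → H) (ρ : ℝ) (n : ℕ) (u : H) :
    ρ * ‖u‖ ^ 2 ≤ ⟪(ρ • ContinuousLinearMap.id ℝ H + epV f n) u, u⟫_ℝ := by
  have : (0:ℝ) ≤ ⟪epV f n u, u⟫_ℝ := by
    rw [epV_apply, sum_inner]
    refine Finset.sum_nonneg fun i _ => ?_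
    rw [real_inner_smul_left]
    exact mul_self_nonneg _
  simp [inner_add_left, real_inner_smul_left] 
  linarith

lemma ep_isUnit (f : ℕ → H) (ρ : ℝ) (hρ : 0 < ρ) (n : ℕ) :
    IsUnit (ρ • ContinuousLinearMap.id ℝ H + epV f n) := by
  refine ContinuousLinearMap.isUnit_of_forall_le_norm_inner_map _ (c := ⟨ρ, hρ.le⟩) hρ
    fun u => ?_
  refine le_trans ?_ (le_trans (ep_coercive f ρ n u) (le_abs_self _))
  exact (mul_comm _ _).le

lemma ep_solve (f : ℕ → H) (ρ : ℝ) (hρ : 0 < ρ) (n : ℕ) (g : H) :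
    (ρ • ContinuousLinearMap.id ℝ H + epV f n)
      (Ring.inverse (ρ • ContinuousLinearMap.id ℝ H + epV f n) g) = g := by
  have := Ring.mul_inverse_cancel _ (ep_isUnit f ρ hρ n)
  exact congrArg (fun T : H →L[ℝ] H => T g) this

lemma ep_det (f : ℕ → H) (ρ : ℝ) (hρ : 0 < ρ) (n : ℕ) (u : H)
    (hu : (ρ • ContinuousLinearMap.id ℝ H + epV f n) u = f (n + 1)) :
    (epN f ρ (n + 1)).det = (epN f ρ n).det * (1 + ⟪f (n + 1), u⟫_ℝ) := by
  have hu' : ∀ v : H, ρ * ⟪v, u⟫_ℝ + ∑ i : Fin n, ⟪f (i.1 + 1), u⟫_ℝ * ⟪v, f (i.1 + 1)⟫_ℝ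
      = ⟪v, f (n + 1)⟫_ℝ := by
    intro v
    rw [← hu]
    simp [epV_apply, inner_add_right, inner_sum, real_inner_smul_right]
  set c : Matrix (Fin n) (Fin 1) ℝ := Matrix.of fun i _ => ⟪f (i.1 + 1), u⟫_ℝ with hc
  set B : Matrix (Fin 1) (Fin n) ℝ := Matrix.of fun _ i => ρ⁻¹ * ⟪f (n + 1), f (i.1 + 1)⟫_ℝ
    with hB
  set b : Matrix (Fin n) (Fin 1) ℝ := Matrix.of fun i _ => ρ⁻¹ * ⟪f (i.1 + 1), f (n + 1)⟫_ℝ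
    with hb
  set d : Matrix (Fin 1) (Fin 1) ℝ := Matrix.of fun _ _ => 1 + ρ⁻¹ * ⟪f (n + 1), f (n + 1)⟫_ℝ
    with hd
  have h1 : (epN f ρ (n + 1)).submatrix finSumFinEquiv finSumFinEquiv =
      Matrix.fromBlocks (epN f ρ n) b B d := by
    ext i j
    rcases i with i | i <;> rcases j with j | j
    · simp [epN, Matrix.one_apply, Fin.ext_iff]
    · have : i.1 ≠ n := i.2.ne
      simp [epN, Matrix.one_apply, Fin.ext_iff, hb, this]
    · have : n ≠ j.1 := j.2.ne'
      simp [epN, Matrix.one_apply, Fin.ext_iff, hB, this]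
    · simp [epN, Matrix.one_apply, Fin.ext_iff, hd]
  have h2 : Matrix.fromBlocks (epN f ρ n) b B d * Matrix.fromBlocks 1 (-c) 0 1 =
      Matrix.fromBlocks (epN f ρ n) 0 B (d - B * c) := by
    rw [Matrix.fromBlocks_multiply]
    have : epN f ρ n * c = b := by
      ext i j
      have := hu' (f (i.1 + 1))
      have e : epN f ρ n * c = c + ρ⁻¹ •
          ((Matrix.of fun i j : Fin n => ⟪f (i.1 + 1), f (j.1 + 1)⟫_ℝ) * c) := by
        rw [epN, Matrix.add_mul, Matrix.one_mul, Matrix.smul_mul]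
      rw [e]
      simp only [Matrix.add_apply, Matrix.smul_apply,
        Matrix.mul_apply, hc, hb, Matrix.of_apply, smul_eq_mul]
      rw [← this]
      field_simp
      simp only [mul_comm]
    simp [this, sub_eq_add_neg, add_comm]
  have h3 : (d - B * c).det = 1 + ⟪f (n + 1), u⟫_ℝ := by
    have := hu' (f (n + 1))
    simp only [Matrix.det_fin_one, Matrix.sub_apply, Matrix.mul_apply, hd, hB, hc, Matrix.of_apply]
    rw [← this]
    simp only [mul_assoc, ← Finset.mul_sum]
    field_simp
    simp only [mul_comm]
    ring
  rw [← Matrix.det_submatrix_equiv_self finSumFinEquiv, h1, ← h3,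
    ← Matrix.det_fromBlocks_zero₁₂ (epN f ρ n) B (d - B * c), ← h2, Matrix.det_mul,
    Matrix.det_fromBlocks_zero₂₁]
  simp

lemma ep_log (x : ℝ) (h0 : 0 ≤ x) (h1 : x ≤ 1) : x ≤ 2 * Real.log (1 + x) := by
  have h := Real.le_log_one_add_of_nonneg h0
  have : x ≤ 2 * (2 * x / (x + 2)) := by
    rw [← mul_div_assoc, le_div_iff₀ (by linarith)]
    nlinarith
  linarith

lemma ep_main (f : ℕ → H) (ρ : ℝ) (hρ : 0 < ρ) (n : ℕ)
    (hf : ∀ s ∈ Finset.Icc 1 n, ‖f s‖ ^ 2 ≤ ρ) :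
    0 < (epN f ρ n).det ∧ ∑ s ∈ Finset.Icc 1 n,
        ⟪f s, Ring.inverse (ρ • ContinuousLinearMap.id ℝ H + epV f (s - 1)) (f s)⟫_ℝ ≤
      2 * Real.log (epN f ρ n).det := by
  induction n with
  | zero => simp
  | succ n ih =>
    obtain ⟨hp, ih⟩ := ih fun s hs => hf s (by simp at hs ⊢; omega)
    have hfn := hf (n + 1) (by simp)
    have hu := ep_solve f ρ hρ n (f (n + 1))
    rw [Finset.sum_Icc_succ_top (by omega), Nat.add_sub_cancel]
    set u := Ring.inverse (ρ • ContinuousLinearMap.id ℝ H + epV f n) (f (n + 1)) with hudef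
    have hco := ep_coercive f ρ n u
    rw [hu] at hco
    have hx0 : 0 ≤ ⟪f (n + 1), u⟫_ℝ := le_trans (by positivity) hco
    have hcs := real_inner_le_norm (f (n + 1)) u
    have hx1 : ⟪f (n + 1), u⟫_ℝ ≤ 1 := by
      have hn : ρ * ‖u‖ ≤ ‖f (n + 1)‖ := by
        rcases (norm_nonneg u).eq_or_lt with h | h
        · rw [← h]; simp
        · exact le_of_mul_le_mul_right (by nlinarith) h
      have : ρ * ⟪f (n + 1), u⟫_ℝ ≤ ρ * 1 := by
        nlinarith [norm_nonneg (f (n + 1))]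
      exact le_of_mul_le_mul_left this hρ
    rw [ep_det f ρ hρ n u hu]
    refine ⟨by positivity, ?_⟩
    rw [Real.log_mul hp.ne' (by positivity)]
    linarith [ep_log _ hx0 hx1]

end helpers

/-- Elliptical potential bound: if `‖f_s‖² ≤ L` for all `s` and
`ρ ≥ max 1 L`, then
`Σ_{s=1}^t ⟨f_s, (ρ·id + V_{s-1})⁻¹ f_s⟩ ≤ 2 log det(I_t + ρ⁻¹ K_t)`. -/
theorem elliptical_potential_bound
    {H : Type*} [NormedAddCommGroup H] [InnerProductSpace ℝ H] [CompleteSpace H]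
    (t : ℕ) (ht : 1 ≤ t) (L : ℝ) (hL : 0 < L) (f : ℕ → H)
    (hf : ∀ s ∈ Finset.Icc 1 t, ‖f s‖ ^ 2 ≤ L)
    (ρ : ℝ) (hρ : max 1 L ≤ ρ)
    -- partial covariance operators `V_s g = Σ_{r=1}^s ⟨f_r, g⟩ f_r` (so `V 0 = 0`)
    (V : ℕ → H →L[ℝ] H)
    (hV : ∀ s, V s = ∑ r ∈ Finset.Icc 1 s, (innerSL ℝ (f r)).smulRight (f r))
    -- Gram matrix `(K_t)_{ij} = ⟨f_i, f_j⟩`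
    (K : Matrix (Fin t) (Fin t) ℝ)
    (hK : ∀ i j : Fin t, K i j = ⟪f (i.1 + 1), f (j.1 + 1)⟫_ℝ) :
    ∑ s ∈ Finset.Icc 1 t,
        ⟪f s, Ring.inverse (ρ • ContinuousLinearMap.id ℝ H + V (s - 1)) (f s)⟫_ℝ ≤
      2 * Real.log (Matrix.det (1 + ρ⁻¹ • K)) := by
  have hVe : V = epV f := funext hV
  have hKe : 1 + ρ⁻¹ • K = epN f ρ t := by
    have : K = Matrix.of fun i j : Fin t => ⟪f (i.1 + 1), f (j.1 + 1)⟫_ℝ := by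
      ext i j
      exact hK i j
    rw [this]
    rfl
  rw [hVe, hKe]
  exact (ep_main f ρ (lt_of_lt_of_le hL (le_trans (le_max_right _ _) hρ)) t
    fun s hs => (hf s hs).trans (le_trans (le_max_right _ _) hρ)).2
end

section
/- Let H be a real Hilbert space, let A : H → H be a positive, self-adjoint, boundedly invertible bounded operator, and let g, h, f*, φ ∈ H and U ≥ 0 satisfy ⟨g − h, A(g − h)⟩ ≤ U² and ⟨h − f*, A(h − f*)⟩ ≤ U². Then ⟨g − f*, φ⟩ ≤ 2U ⟨φ, A^{-1} φ⟩^{1/2}. Consequently, in the GP-UCB analysis with A = ρ·id_H + V_{t-1}, g = f̃_t (the optimistic function), h = f_{t-1} (the ridge estimate), and φ = k(·, X_t), the instantaneous regret r_t = f*(x*) − f*(X_t) satisfies r_t ≤ 2U_{t-1} ⟨φ, A^{-1}φ⟩^{1/2} whenever optimism f*(x*) ≤ ⟨f̃_t, φ⟩ holds. -/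
open scoped InnerProductSpace

/-- Cauchy-Schwarz for the semi-inner product of a positive self-adjoint operator. -/
theorem cs_aux {H : Type*} [NormedAddCommGroup H] [InnerProductSpace ℝ H]
    (A : H →L[ℝ] H) (hp : ∀ x : H, 0 ≤ ⟪x, A x⟫_ℝ)
    (hs : ∀ x y : H, ⟪A x, y⟫_ℝ = ⟪x, A y⟫_ℝ) (u v : H) (U : ℝ) (hU : 0 ≤ U)
    (h : ⟪u, A u⟫_ℝ ≤ U ^ 2) : ⟪u, A v⟫_ℝ ≤ U * Real.sqrt ⟪v, A v⟫_ℝ := by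
  have hc : ⟪v, A u⟫_ℝ = ⟪u, A v⟫_ℝ := by rw [← hs, real_inner_comm]
  have key : ∀ t : ℝ, 0 ≤ ⟪v, A v⟫_ℝ * (t * t) + (2 * ⟪u, A v⟫_ℝ) * t + ⟪u, A u⟫_ℝ := by
    intro t
    have := hp (u + t • v)
    simp only [map_add, map_smul, inner_add_left, inner_add_right, real_inner_smul_left,
      real_inner_smul_right, hc] at this
    linarith
  have hd := discrim_le_zero key
  unfold discrim at hd
  have hv := hp v
  refine abs_le_of_sq_le_sq' ?_ (by positivity) |>.2
  rw [mul_pow, Real.sq_sqrt hv]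
  nlinarith [mul_le_mul_of_nonneg_right h hv]

/-- Instantaneous-regret bound from two ellipsoid memberships: if `A` is a
positive, self-adjoint, boundedly invertible bounded operator and
`⟨g − h, A(g − h)⟩ ≤ U²`, `⟨h − f*, A(h − f*)⟩ ≤ U²`, then
`⟨g − f*, φ⟩ ≤ 2U ⟨φ, A⁻¹φ⟩^{1/2}`. (In the GP-UCB analysis, with
`A = ρ·id + V_{t-1}`, `g = f̃_t`, `h = f_{t-1}`, `φ = k(·, X_t)`, this bounds the
instantaneous regret on the optimism event.) -/
theorem instantaneous_regret_bound
    {H : Type*} [NormedAddCommGroup H] [InnerProductSpace ℝ H] [CompleteSpace H]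
    (A : H →L[ℝ] H)
    (hA_pos : ∀ x : H, 0 ≤ ⟪x, A x⟫_ℝ)
    (hA_sa : ∀ x y : H, ⟪A x, y⟫_ℝ = ⟪x, A y⟫_ℝ)
    (hA_inv : IsUnit A)
    (g h fstar φ : H) (U : ℝ) (hU : 0 ≤ U)
    (h1 : ⟪g - h, A (g - h)⟫_ℝ ≤ U ^ 2)
    (h2 : ⟪h - fstar, A (h - fstar)⟫_ℝ ≤ U ^ 2) :
    ⟪g - fstar, φ⟫_ℝ ≤ 2 * U * Real.sqrt ⟪φ, Ring.inverse A φ⟫_ℝ := by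
  have hinv : A (Ring.inverse A φ) = φ := by
    have := congrArg (fun B : H →L[ℝ] H => B φ) (Ring.mul_inverse_cancel A hA_inv)
    simpa using this
  set ψ := Ring.inverse A φ with hψ
  have e : ⟪φ, ψ⟫_ℝ = ⟪ψ, A ψ⟫_ℝ := by rw [hinv, real_inner_comm]
  have a1 := cs_aux A hA_pos hA_sa (g - h) ψ U hU h1
  have a2 := cs_aux A hA_pos hA_sa (h - fstar) ψ U hU h2
  rw [← e, hinv] at a1 a2
  have : g - fstar = (g - h) + (h - fstar) := by abel
  rw [this, inner_add_left]
  linarith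
end

section
/- Let H be a real Hilbert space, fix T ≥ 1, ρ > 0, U ≥ 0, and f_1, …, f_T ∈ H with ‖f_t‖² ≤ L for all t, where ρ ≥ max(1, L). For 0 ≤ t ≤ T let V_t be the operator g ↦ Σ_{s=1}^t ⟨f_s, g⟩ f_s (with V_0 = 0) and let K_T be the Gram matrix (K_T)_{ij} = ⟨f_i, f_j⟩. Suppose r_1, …, r_T are nonnegative reals satisfying r_t ≤ 2U ⟨f_t, (ρ·id_H + V_{t-1})^{-1} f_t⟩^{1/2} for every t ∈ {1,…,T}. Then Σ_{t=1}^T r_t ≤ 2U √( 2 T log det(I_T + ρ^{-1} K_T) ). -/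
open scoped InnerProductSpace

lemma sum_Icc_shift {M : Type*} [AddCommMonoid M] (F : ℕ → M) (n : ℕ) :
    ∑ t ∈ Finset.Icc 1 n, F t = ∑ i ∈ Finset.range n, F (i+1) := by
  induction n with
  | zero => simp
  | succ n ih => rw [Finset.sum_Icc_succ_top (by omega), ih, Finset.sum_range_succ]

lemma aux_det {H : Type*} [NormedAddCommGroup H] [InnerProductSpace ℝ H]
    (f : ℕ → H) (ρ : ℝ) (hρ : 0 < ρ) (n : ℕ) (g : H)
    (hg : ρ • g + ∑ i : Fin n, ⟪f (i.1 + 1), g⟫_ℝ • f (i.1 + 1) = f (n + 1))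
    (hD : 0 < Matrix.det (1 + ρ⁻¹ • Matrix.of fun i j : Fin n => ⟪f (i.1 + 1), f (j.1 + 1)⟫_ℝ)) :
    Matrix.det (1 + ρ⁻¹ • Matrix.of fun i j : Fin (n+1) => ⟪f (i.1 + 1), f (j.1 + 1)⟫_ℝ) =
    Matrix.det (1 + ρ⁻¹ • Matrix.of fun i j : Fin n => ⟪f (i.1 + 1), f (j.1 + 1)⟫_ℝ)
      * (1 + ⟪f (n+1), g⟫_ℝ) := by
  set M := (1 + ρ⁻¹ • Matrix.of fun i j : Fin n => ⟪f (i.1 + 1), f (j.1 + 1)⟫_ℝ) with hM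
  have hu : IsUnit M.det := hD.ne'.isUnit
  let B : Matrix (Fin n) (Fin 1) ℝ := Matrix.of fun i _ => ρ⁻¹ * ⟪f (i.1 + 1), f (n + 1)⟫_ℝ
  let C : Matrix (Fin 1) (Fin n) ℝ := Matrix.of fun _ i => ρ⁻¹ * ⟪f (i.1 + 1), f (n + 1)⟫_ℝ
  let E : Matrix (Fin 1) (Fin 1) ℝ := Matrix.of fun _ _ => 1 + ρ⁻¹ * ⟪f (n + 1), f (n + 1)⟫_ℝ
  let a : Matrix (Fin n) (Fin 1) ℝ := Matrix.of fun i _ => ⟪f (i.1 + 1), g⟫_ℝ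
  have hMa : M * a = B := by
    ext i j
    have h := congrArg (fun z => ⟪f (i.1 + 1), z⟫_ℝ) hg
    simp only [inner_add_right, inner_smul_right, inner_sum] at h
    rw [hM, Matrix.add_mul, Matrix.one_mul, Matrix.smul_mul]
    simp only [a, B, Matrix.add_apply, Matrix.smul_apply, Matrix.mul_apply, Matrix.of_apply,
      smul_eq_mul]
    rw [← h]
    have : ∀ s : Fin n, ⟪f (i.1+1), f (s.1+1)⟫_ℝ * ⟪f (s.1+1), g⟫_ℝ =
      ⟪f (s.1+1), g⟫_ℝ * ⟪f (i.1+1), f (s.1+1)⟫_ℝ := fun s => mul_comm _ _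
    simp only [this]
    field_simp
  have hblock : (1 + ρ⁻¹ • Matrix.of fun i j : Fin (n+1) => ⟪f (i.1 + 1), f (j.1 + 1)⟫_ℝ)
      = Matrix.reindex finSumFinEquiv finSumFinEquiv (Matrix.fromBlocks M B C E) := by
    apply (Matrix.reindex finSumFinEquiv finSumFinEquiv).symm.injective
    rw [Equiv.symm_apply_apply]
    ext (i | i) (j | j)
    · simp [hM, Matrix.one_apply, Fin.ext_iff]
    · have : i.1 ≠ n := i.2.ne
      simp [B, Matrix.one_apply, Fin.ext_iff, this]
    · have : n ≠ j.1 := j.2.ne'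
      simp [C, Matrix.one_apply, Fin.ext_iff, this, real_inner_comm]
    · simp [E, Matrix.one_apply, Fin.ext_iff]
  rw [hblock, Matrix.det_reindex_self]
  letI := Matrix.invertibleOfIsUnitDet M hu
  rw [Matrix.det_fromBlocks₁₁]
  congr 1
  have h1 : ⅟M * B = a := by rw [← hMa, ← Matrix.mul_assoc, invOf_mul_self, Matrix.one_mul]
  rw [Matrix.mul_assoc, h1, Matrix.det_fin_one]
  have h := congrArg (fun z => ⟪f (n + 1), z⟫_ℝ) hg
  simp only [inner_add_right, inner_smul_right, inner_sum] at h
  simp only [E, C, a, Matrix.sub_apply, Matrix.mul_apply, Matrix.of_apply]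
  rw [← h]
  have : ∀ s : Fin n, ρ⁻¹ * ⟪f (s.1+1), f (n+1)⟫_ℝ * ⟪f (s.1+1), g⟫_ℝ =
      ρ⁻¹ * (⟪f (s.1+1), g⟫_ℝ * ⟪f (n+1), f (s.1+1)⟫_ℝ) := fun s => by
    rw [real_inner_comm (f (n+1))]; ring
  simp only [this, ← Finset.mul_sum]
  field_simp
  ring

lemma aux_unit {H : Type*} [NormedAddCommGroup H] [InnerProductSpace ℝ H] [CompleteSpace H]
    (f : ℕ → H) (ρ : ℝ) (hρ : 0 < ρ) (V : ℕ → H →L[ℝ] H)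
    (hV : ∀ s, V s = ∑ r ∈ Finset.Icc 1 s, (innerSL ℝ (f r)).smulRight (f r)) (n : ℕ) :
    ∃ g, g = Ring.inverse (ρ • ContinuousLinearMap.id ℝ H + V n) (f (n+1)) ∧
      ρ • g + ∑ i : Fin n, ⟪f (i.1 + 1), g⟫_ℝ • f (i.1 + 1) = f (n + 1) ∧
      ρ * ‖g‖ ^ 2 ≤ ⟪f (n+1), g⟫_ℝ := by
  set A := ρ • ContinuousLinearMap.id ℝ H + V n with hA
  have hAx : ∀ x, A x = ρ • x + ∑ i : Fin n, ⟪f (i.1 + 1), x⟫_ℝ • f (i.1 + 1) := by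
    intro x
    rw [Fin.sum_univ_eq_sum_range (fun i => ⟪f (i + 1), x⟫_ℝ • f (i + 1)) n,
      ← sum_Icc_shift (fun i => ⟪f i, x⟫_ℝ • f i) n]
    simp [hA, hV]
  have hpos : ∀ x, ρ * ‖x‖ ^ 2 ≤ ⟪A x, x⟫_ℝ := by
    intro x
    rw [hAx, inner_add_left, inner_smul_left, sum_inner, real_inner_self_eq_norm_sq]
    simp only [inner_smul_left, conj_trivial]
    have : 0 ≤ ∑ i : Fin n, ⟪f (i.1 + 1), x⟫_ℝ * ⟪f (i.1 + 1), x⟫_ℝ :=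
      Finset.sum_nonneg fun i _ => mul_self_nonneg _
    linarith
  have hu : IsUnit A := by
    apply ContinuousLinearMap.isUnit_of_forall_le_norm_inner_map A (c := ⟨ρ, hρ.le⟩) hρ
    intro x
    have := (hpos x).trans (le_abs_self _)
    rw [mul_comm]
    exact this
  have hAg : A (Ring.inverse A (f (n+1))) = f (n+1) := by
    rw [← ContinuousLinearMap.mul_apply, Ring.mul_inverse_cancel A hu]; rfl
  refine ⟨_, rfl, ?_, ?_⟩
  · rw [← hAx, hAg]
  · have := hpos (Ring.inverse A (f (n+1)))
    rwa [hAg] at this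

/-- Aggregation of instantaneous regrets (Cauchy–Schwarz plus the
elliptical potential bound): if `0 ≤ r_t ≤ 2U ⟨f_t, (ρ·id + V_{t-1})⁻¹ f_t⟩^{1/2}` for all
`t ∈ {1,…,T}`, with `‖f_t‖² ≤ L` and `ρ ≥ max 1 L`, then
`Σ_{t=1}^T r_t ≤ 2U √(2T log det(I_T + ρ⁻¹K_T))`. -/
theorem regret_aggregation
    {H : Type*} [NormedAddCommGroup H] [InnerProductSpace ℝ H] [CompleteSpace H]
    (T : ℕ) (hT : 1 ≤ T) (U : ℝ) (hU : 0 ≤ U) (L : ℝ) (hL : 0 < L) (f : ℕ → H)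
    (hf : ∀ t ∈ Finset.Icc 1 T, ‖f t‖ ^ 2 ≤ L)
    (ρ : ℝ) (hρ : max 1 L ≤ ρ)
    -- partial covariance operators `V_t g = Σ_{s=1}^t ⟨f_s, g⟩ f_s` (so `V 0 = 0`)
    (V : ℕ → H →L[ℝ] H)
    (hV : ∀ s, V s = ∑ r ∈ Finset.Icc 1 s, (innerSL ℝ (f r)).smulRight (f r))
    -- Gram matrix `(K_T)_{ij} = ⟨f_i, f_j⟩`
    (K : Matrix (Fin T) (Fin T) ℝ)
    (hK : ∀ i j : Fin T, K i j = ⟪f (i.1 + 1), f (j.1 + 1)⟫_ℝ)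
    (r : ℕ → ℝ) (hr_nonneg : ∀ t ∈ Finset.Icc 1 T, 0 ≤ r t)
    (hr : ∀ t ∈ Finset.Icc 1 T,
      r t ≤ 2 * U * Real.sqrt
        ⟪f t, Ring.inverse (ρ • ContinuousLinearMap.id ℝ H + V (t - 1)) (f t)⟫_ℝ) :
    ∑ t ∈ Finset.Icc 1 T, r t ≤
      2 * U * Real.sqrt (2 * T * Real.log (Matrix.det (1 + ρ⁻¹ • K))) := by
  have h1ρ : 1 ≤ ρ := (le_max_left _ _).trans hρ
  have hLρ : L ≤ ρ := (le_max_right _ _).trans hρ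
  have hρ0 : 0 < ρ := by linarith
  choose g hgdef hg hgpos using aux_unit f ρ hρ0 V hV
  set x : ℕ → ℝ := fun n => ⟪f (n+1), g n⟫_ℝ with hx
  have hx0 : ∀ n, 0 ≤ x n := fun n => le_trans (by positivity) (hgpos n)
  have hx1 : ∀ n, n < T → x n ≤ 1 := by
    intro n hn
    have hfn := hf (n+1) (by simp; omega)
    have h1 : x n ≤ ‖f (n+1)‖ * ‖g n‖ := real_inner_le_norm _ _
    have h2 : x n ^ 2 ≤ x n := by
      calc x n ^ 2 ≤ (‖f (n+1)‖ * ‖g n‖) ^ 2 := pow_le_pow_left₀ (hx0 n) h1 2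
        _ = ‖f (n+1)‖ ^ 2 * ‖g n‖ ^ 2 := by ring
        _ ≤ ρ * ‖g n‖ ^ 2 := by gcongr; linarith
        _ ≤ x n := hgpos n
    nlinarith [hx0 n]
  have hxlog : ∀ n, n < T → x n ≤ 2 * Real.log (1 + x n) := by
    intro n hn
    have h0 := hx0 n
    have h1 := hx1 n hn
    have h2 := Real.one_sub_inv_le_log_of_pos (show 0 < 1 + x n by linarith)
    have h3 : x n / 2 ≤ 1 - (1 + x n)⁻¹ := by
      have : 1 - (1 + x n)⁻¹ = x n / (1 + x n) := by
        have : 1 + x n ≠ 0 := by linarith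
        field_simp
        ring
      rw [this]
      gcongr
      linarith
    linarith
  have hdet : ∀ n, 
      Matrix.det (1 + ρ⁻¹ • Matrix.of fun i j : Fin n => ⟪f (i.1 + 1), f (j.1 + 1)⟫_ℝ)
      = ∏ i ∈ Finset.range n, (1 + x i) := by
    intro n
    induction n with
    | zero => simp
    | succ n ih =>
      rw [aux_det f ρ hρ0 n (g n) (hg n), ih, Finset.prod_range_succ]
      rw [ih]
      exact Finset.prod_pos fun i _ => by linarith [hx0 i]
  have hKe : K = Matrix.of fun i j : Fin T => ⟪f (i.1 + 1), f (j.1 + 1)⟫_ℝ := by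
    ext i j; exact hK i j
  rw [hKe, hdet, Real.log_prod (fun i _ => by linarith [hx0 i])]
  have hsum : ∑ t ∈ Finset.Icc 1 T, r t = ∑ n ∈ Finset.range T, r (n+1) := by
    rw [sum_Icc_shift]
  rw [hsum]
  calc ∑ n ∈ Finset.range T, r (n+1)
      ≤ ∑ n ∈ Finset.range T, 2 * U * Real.sqrt (x n) := by
        apply Finset.sum_le_sum
        intro n hn
        have := hr (n+1) (by simp at hn ⊢; omega)
        rw [Nat.add_sub_cancel, ← hgdef] at this
        exact this
    _ = 2 * U * ∑ n ∈ Finset.range T, Real.sqrt (x n) := by rw [Finset.mul_sum]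
    _ ≤ _ := by
        gcongr
        apply Real.le_sqrt_of_sq_le
        refine (sq_sum_le_card_mul_sum_sq).trans ?_
        rw [Finset.card_range, mul_comm (2:ℝ), mul_assoc, Finset.mul_sum (Finset.range T) _ (2:ℝ)]
        refine mul_le_mul_of_nonneg_left (Finset.sum_le_sum fun n hn => ?_) (by positivity)
        rw [Real.sq_sqrt (hx0 n)]
        exact hxlog n (Finset.mem_range.1 hn)
end
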